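/- arXiv:1307.7634 — 2 statements merged into one kernel-verified Lean document; each statement's English description precedes it below -/
import Mathlib

section
/- Let A be a commutative ring of prime characteristic p, let σ : A → A be a Frobenius splitting of A, and let (I_m)_{m≥0} be a decreasing multiplicative filtration of A by ideals such that σ(I_{pm+1}) ⊆ I_{m+1} for all m ≥ 0. Then the associated graded ring gr A = ⊕_{m≥0} I_m/I_{m+1} (with multiplication induced by the multiplication of A) is Frobenius split: there exists an additive map τ : gr A → gr A with τ(ξ^p·η) = ξ·τ(η) for all ξ, η ∈ gr A and τ(1) = 1. Moreover τ can be chosen graded, i.e. τ maps the graded piece I_{pm}/I_{pm+1} of degree pm into the graded piece I_m/I_{m+1} of degree m and vanishes on the graded pieces of degree not divisible by p. -/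
/-!
The splitting of `gr A` sends the class of `x ∈ I (p * m)` to the class of `σ x` in degree `m`, and
kills the pieces of degree prime to `p`. It makes sense because `σ` maps `I (p * m)` into `I m`: for
`m = k + 1` this follows from `I (p * m) ≤ I (p * k + 1)`. It is well defined because `σ` maps
`I (p * m + 1)` into `I (m + 1)`. `exists_hom_of_internal` glues these maps over the direct sum
decomposition. Since `gr A` has characteristic `p`, the map `ξ ↦ ξ ^ p` is additive, so Frobenius
linearity only needs to be checked on homogeneous elements, where it is Frobenius linearity of `σ`.
-/

/-- A map out of an internal direct sum of the images of maps `g m` may be prescribed on each `M m`,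
as long as it kills the kernel of `g m`. -/
theorem exists_hom_of_internal {B : Type*} [AddCommGroup B] {M : ℕ → Type*}
    [∀ m, AddCommGroup (M m)] (g : ∀ m, M m →+ B)
    (hint : DirectSum.IsInternal (fun m : ℕ => (g m).range))
    (ψ : ∀ m, M m →+ B) (hψ : ∀ m x, g m x = 0 → ψ m x = 0) :
    ∃ τ : B →+ B, ∀ m x, τ (g m x) = ψ m x := by
  classical
  have hφ : ∀ m, ∃ φ : (g m).range →+ B, ∀ x, φ ((g m).rangeRestrict x) = ψ m x := by
    intro m
    refine ⟨(g m).rangeRestrict.liftOfRightInverse _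
      (Function.rightInverse_surjInv (g m).rangeRestrict_surjective) ⟨ψ m, ?_⟩, fun x => ?_⟩
    · intro x hx
      exact hψ m x (congrArg Subtype.val (AddMonoidHom.mem_ker.mp hx))
    · exact AddMonoidHom.liftOfRightInverse_comp_apply _ _ _ _ x
  choose φ hφ using hφ
  let e := AddEquiv.ofBijective (DirectSum.coeAddMonoidHom fun m : ℕ => (g m).range) hint
  refine ⟨(DirectSum.toAddMonoid φ).comp e.symm.toAddMonoidHom, fun m x => ?_⟩
  have he : e.symm (g m x) = DirectSum.of (fun m : ℕ => (g m).range) m ((g m).rangeRestrict x) := by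
    rw [AddEquiv.symm_apply_eq]
    exact (DirectSum.coeAddMonoidHom_of (fun m : ℕ => (g m).range) m
      ((g m).rangeRestrict x)).symm
  change DirectSum.toAddMonoid φ (e.symm (g m x)) = _
  rw [he, DirectSum.toAddMonoid_of, hφ]

theorem induction_of_internal {B : Type*} [AddCommGroup B] {M : ℕ → Type*}
    [∀ m, AddCommGroup (M m)] (g : ∀ m, M m →+ B)
    (hint : DirectSum.IsInternal (fun m : ℕ => (g m).range)) {P : B → Prop}
    (h0 : P 0) (hg : ∀ m x, P (g m x)) (hadd : ∀ a b, P a → P b → P (a + b)) (b : B) : P b := by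
  classical
  obtain ⟨s, rfl⟩ := hint.surjective b
  induction s using DirectSum.induction_on with
  | zero => simpa using h0
  | of m y =>
    obtain ⟨y, x, rfl⟩ := y
    simpa using hg m x
  | add s t hs ht => rw [map_add]; exact hadd _ _ hs ht


/-- With `A`, `p`, `σ`, `(I m)` as in Statement 0, the associated graded ring
`gr A = ⊕_{m ≥ 0} I m / I (m+1)` (with multiplication induced by that of `A`) is
Frobenius split by a graded splitting.

Here the associated graded ring is presented abstractly: `B` is a commutative ring
together with additive maps `g m : I m →+ B` for each `m` such that the kernel of
`g m` is exactly `I (m+1)`, the product of the classes of `x ∈ I a` and `y ∈ I b` is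
the class of `x * y` in degree `a + b`, the class of `1` in degree `0` is `1`, and `B`
is the internal direct sum of the images of the `g m` (these images are the graded
pieces `I m / I (m+1)`).  The conclusion: there is an additive map `τ : B → B` with
`τ (ξ^p * η) = ξ * τ η` for all `ξ η` and `τ 1 = 1`, which moreover is graded: `τ`
maps the graded piece of degree `p*m` into the graded piece of degree `m`, and `τ`
vanishes on the graded pieces of degree not divisible by `p`. -/
theorem stmt_3 (p : ℕ) (hp : p.Prime)
    (A : Type*) [CommRing A] (hchar : (p : A) = 0)
    (σ : A → A)
    (hσadd : ∀ f g : A, σ (f + g) = σ f + σ g)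
    (hσfrob : ∀ f g : A, σ (f ^ p * g) = f * σ g)
    (hσone : σ 1 = 1)
    (I : ℕ → Ideal A)
    (hI0 : I 0 = ⊤)
    (hIdec : ∀ m : ℕ, I (m + 1) ≤ I m)
    (hImul : ∀ m n : ℕ, I m * I n ≤ I (m + n))
    (hσI : ∀ m : ℕ, ∀ x ∈ I (p * m + 1), σ x ∈ I (m + 1))
    -- `B`, together with the maps `g m`, is the associated graded ring `gr A`:
    (B : Type*) [CommRing B]
    (g : ∀ m : ℕ, (I m) →+ B)
    (hg_ker : ∀ (m : ℕ) (x : I m), g m x = 0 ↔ (x : A) ∈ I (m + 1))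
    (hg_mul : ∀ (a b : ℕ) (x : I a) (y : I b) (h : (x : A) * (y : A) ∈ I (a + b)),
      g a x * g b y = g (a + b) ⟨(x : A) * (y : A), h⟩)
    (hg_one : ∀ h : (1 : A) ∈ I 0, g 0 ⟨1, h⟩ = 1)
    (hg_internal : DirectSum.IsInternal (fun m : ℕ => (g m).range)) :
    -- conclusion: `B = gr A` is Frobenius split by a graded splitting
    ∃ τ : B → B,
      (∀ ξ η : B, τ (ξ + η) = τ ξ + τ η) ∧
      (∀ ξ η : B, τ (ξ ^ p * η) = ξ * τ η) ∧
      τ 1 = 1 ∧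
      (∀ m : ℕ, ∀ b ∈ (g (p * m)).range, τ b ∈ (g m).range) ∧
      (∀ n : ℕ, ¬ p ∣ n → ∀ b ∈ (g n).range, τ b = 0) := by
  classical
  have hσ0 : σ 0 = 0 := by simpa using hσadd 0 0
  have hσI' : ∀ m : ℕ, ∀ x ∈ I (p * m), σ x ∈ I m := by
    intro m x hx
    cases m with
    | zero => simp [hI0]
    | succ k =>
      refine hσI k x (antitone_nat_of_succ_le hIdec ?_ hx)
      have := hp.pos
      rw [mul_add]
      omega
  have hψ : ∀ n, ∃ ψ : I n →+ B, (∀ x, g n x = 0 → ψ x = 0) ∧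
      (∀ m, n = p * m → ∀ (x : I n) (h : σ x ∈ I m), ψ x = g m ⟨σ x, h⟩) ∧
      (¬ p ∣ n → ψ = 0) := by
    intro n
    by_cases hn : p ∣ n
    · obtain ⟨m, rfl⟩ := hn
      let s : I (p * m) →+ I m :=
        { toFun := fun x => ⟨σ x, hσI' m x x.2⟩
          map_zero' := Subtype.ext hσ0
          map_add' := fun x y => Subtype.ext (hσadd x y) }
      refine ⟨(g m).comp s, fun x hx => ?_, fun m' hm x h => ?_, fun h => (h ⟨m, rfl⟩).elim⟩
      · exact (hg_ker m (s x)).2 (hσI m x ((hg_ker _ x).1 hx))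
      · obtain rfl := Nat.eq_of_mul_eq_mul_left hp.pos hm
        rfl
    · exact ⟨0, fun _ _ => rfl, fun m hm => (hn ⟨m, hm⟩).elim, fun _ => rfl⟩
  choose ψ hψker hψp hψ0 using hψ
  obtain ⟨τ, hτ⟩ := exists_hom_of_internal g hg_internal ψ hψker
  have hτp : ∀ m (x : I (p * m)), τ (g (p * m) x) = g m ⟨σ x, hσI' m x x.2⟩ := fun m x => by
    rw [hτ, hψp _ m rfl]
  have hτ0 : ∀ n, ¬ p ∣ n → ∀ x, τ (g n x) = 0 := fun n hn x => by
    rw [hτ, hψ0 n hn]; rfl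
  have hg_congr : ∀ {m n : ℕ}, m = n → ∀ (x : I m) (y : I n), (x : A) = y → g m x = g n y := by
    rintro m _ rfl x y h
    rw [Subtype.ext h]
  have h1 : (1 : A) ∈ I 0 := by simp [hI0]
  have hmem : ∀ {a b : ℕ} {x y : A}, x ∈ I a → y ∈ I b → x * y ∈ I (a + b) :=
    fun hx hy => hImul _ _ (Ideal.mul_mem_mul hx hy)
  have hpow : ∀ (k a : ℕ) (x : I a), ∃ h : (x : A) ^ k ∈ I (k * a),
      g a x ^ k = g (k * a) ⟨(x : A) ^ k, h⟩ := by
    intro k a x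
    induction k with
    | zero =>
      have h : (x : A) ^ 0 ∈ I (0 * a) := by simp [hI0]
      refine ⟨h, ?_⟩
      rw [pow_zero, ← hg_one h1]
      exact hg_congr (by simp) _ _ (by simp)
    | succ k ih =>
      obtain ⟨h, e⟩ := ih
      have h' := hmem h x.2
      have hk : k * a + a = (k + 1) * a := by ring
      refine ⟨by rw [pow_succ, ← hk]; exact h', ?_⟩
      rw [pow_succ, e, hg_mul _ _ _ _ h']
      exact hg_congr hk _ _ (pow_succ _ _).symm
  have hpB : (p : B) = 0 := by
    have h : p • g 0 ⟨1, h1⟩ = 0 := by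
      rw [← map_nsmul, hg_ker]
      simp [hchar]
    simpa [hg_one h1] using h
  have hfrob : ∀ ξ ξ' : B, (ξ + ξ') ^ p = ξ ^ p + ξ' ^ p := by
    intro ξ ξ'
    obtain ⟨r, hr⟩ := exists_add_pow_prime_eq hp ξ ξ'
    rw [hr, hpB]
    ring
  refine ⟨τ, map_add τ, ?_, ?_, ?_, ?_⟩
  · intro ξ η
    induction ξ using induction_of_internal g hg_internal with
    | h0 => simp [hp.ne_zero]
    | hadd ξ ξ' h h' => rw [hfrob, add_mul, map_add, h, h', add_mul]
    | hg a x =>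
      induction η using induction_of_internal g hg_internal with
      | h0 => simp
      | hadd η η' h h' => rw [mul_add, map_add, h, h', map_add, mul_add]
      | hg b y =>
        obtain ⟨hx, e⟩ := hpow p a x
        rw [e, hg_mul _ _ _ _ (hmem hx y.2)]
        by_cases hb : p ∣ b
        · obtain ⟨m, rfl⟩ := hb
          have hy : (x : A) ^ p * y ∈ I (p * (a + m)) := by
            rw [mul_add]; exact hmem hx y.2
          rw [hg_congr (mul_add p a m).symm _ ⟨_, hy⟩ rfl, hτp, hτp,
            hg_mul _ _ _ _ (hmem x.2 (hσI' m y y.2))]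
          exact hg_congr rfl _ _ (hσfrob x y)
        · rw [hτ0 b hb, mul_zero, hτ0]
          rwa [Nat.dvd_add_right (dvd_mul_right p a)]
  · have h1' : (1 : A) ∈ I (p * 0) := h1
    have e : g (p * 0) ⟨1, h1'⟩ = 1 := hg_one h1
    rw [← e, hτp, e, ← hg_one h1]
    exact hg_congr rfl _ _ hσone
  · rintro m _ ⟨x, rfl⟩
    exact ⟨_, (hτp m x).symm⟩
  · rintro n hn _ ⟨x, rfl⟩
    exact hτ0 n hn x
end

section
/- Let A = ⊕_{n≥0} A_n be a commutative ℕ-graded ring of prime characteristic p, let σ : A → A be a Frobenius splitting of A that is graded in the sense that σ(A_{pn}) ⊆ A_n for all n ≥ 0 and σ(A_n) = 0 whenever p does not divide n, and let (I_m)_{m≥0} be a decreasing multiplicative filtration of A by homogeneous (graded) ideals with σ(I_{pm+1}) ⊆ I_{m+1} for all m ≥ 0. Then the associated graded ring gr A = ⊕_{m≥0} I_m/I_{m+1}, which inherits a second ℕ-grading from the grading of A (so its (m,n) bigraded piece is (I_m ∩ A_n + I_{m+1})/I_{m+1}), admits a Frobenius splitting τ with τ(ξ^p·η) = ξ·τ(η)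 and τ(1) = 1 that is bigraded: τ maps the bigraded piece of bidegree (pm, pn) into the bigraded piece of bidegree (m, n), and τ vanishes on every bigraded piece of bidegree (m', n') for which p does not divide m' or p does not divide n'. -/
/-!
Since `p * (m + 1) ≥ p * m + 1`, the hypothesis `σ (I (p * m + 1)) ⊆ I (m + 1)` also gives
`σ (I (p * m)) ⊆ I m` (the case `m = 0` being trivial as `I 0 = A`). Hence `σ` induces additive maps
`I (p * m) / I (p * m + 1) → I m / I (m + 1)`, and `τ` is their sum, extended by zero to the pieces
whose filtration degree is not divisible by `p`. In characteristic `p` both sides of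
`τ (ξ ^ p * η) = ξ * τ η` are additive in `ξ` and in `η`, so it is enough to take `ξ`, `η`
homogeneous, where the identity is that of `σ` on representatives. The bigraded claims are read off
representatives in the same way.
-/

/-- `(ξ + η) ^ p = ξ ^ p + η ^ p` when `p = 0`; the zero ring, to which `CharP` with prime `p` does
not apply, is included. -/
lemma add_pow_of_prime_eq_zero {p : ℕ} (hp : p.Prime) {B : Type*} [CommRing B]
    (h : (p : B) = 0) (x y : B) : (x + y) ^ p = x ^ p + y ^ p := by
  rcases subsingleton_or_nontrivial B with hB | hB
  · exact Subsingleton.elim _ _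
  · have : Fact p.Prime := ⟨hp⟩
    have : CharP B p := (CharP.charP_iff_prime_eq_zero hp).2 h
    exact add_pow_char x y p

/-- Transport of a symbol `g a x` along equalities of degrees and of representatives. -/
lemma symbol_congr {A B : Type*} [CommRing A] [CommRing B] {I : ℕ → Ideal A}
    (g : ∀ m : ℕ, (I m) →+ B) {a b : ℕ} {x y : A} (hab : a = b) (hxy : x = y)
    (hx : x ∈ I a) (hy : y ∈ I b) : g a ⟨x, hx⟩ = g b ⟨y, hy⟩ := by
  subst hab; subst hxy; rfl

lemma pow_mem_filtration {A : Type*} [CommRing A] {I : ℕ → Ideal A} (hI0 : I 0 = ⊤)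
    (hImul : ∀ m n : ℕ, I m * I n ≤ I (m + n)) {a : ℕ} {x : A} (hx : x ∈ I a) (n : ℕ) :
    x ^ n ∈ I (n * a) := by
  induction n with
  | zero => simp [hI0]
  | succ n ih =>
    rw [pow_succ, Nat.succ_mul]
    exact hImul _ _ (Ideal.mul_mem_mul ih hx)

lemma symbol_pow {A B : Type*} [CommRing A] [CommRing B] {I : ℕ → Ideal A} (hI0 : I 0 = ⊤)
    (hImul : ∀ m n : ℕ, I m * I n ≤ I (m + n)) (g : ∀ m : ℕ, (I m) →+ B)
    (hg_mul : ∀ (a b : ℕ) (x : I a) (y : I b) (h : (x : A) * (y : A) ∈ I (a + b)),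
      g a x * g b y = g (a + b) ⟨(x : A) * (y : A), h⟩)
    (hg_one : ∀ h : (1 : A) ∈ I 0, g 0 ⟨1, h⟩ = 1)
    {a : ℕ} (x : I a) (n : ℕ) (h : (x : A) ^ n ∈ I (n * a)) :
    g a x ^ n = g (n * a) ⟨(x : A) ^ n, h⟩ := by
  induction n with
  | zero =>
    rw [pow_zero, ← hg_one (by simp [hI0])]
    exact symbol_congr g (by simp) (by simp) _ _
  | succ n ih =>
    have hn := pow_mem_filtration hI0 hImul x.2 n
    rw [pow_succ, ih hn, hg_mul _ _ _ _ (hImul _ _ (Ideal.mul_mem_mul hn x.2))]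
    exact symbol_congr g (by ring) (by ring) _ _

/-- An additive map defined on each piece of an internal direct sum extends to the whole group. -/
lemma exists_extend_of_isInternal {B : Type*} [AddCommGroup B] {G : ℕ → AddSubgroup B}
    (hG : DirectSum.IsInternal G) (t : ∀ m, G m →+ B) :
    ∃ τ : B →+ B, ∀ m (b : G m), τ b = t m b := by
  let e := AddEquiv.ofBijective (DirectSum.coeAddMonoidHom G) hG
  refine ⟨(DirectSum.toAddMonoid t).comp e.symm.toAddMonoidHom, fun m b => ?_⟩
  have h : e.symm b = DirectSum.of (fun m => G m) m b := by
    rw [AddEquiv.symm_apply_eq]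
    exact (DirectSum.coeAddMonoidHom_of G m b).symm
  simp [h]

/-- Let `A = ⊕_{n≥0} A n` be a commutative `ℕ`-graded ring of prime characteristic `p`
(the grading is given by `𝒜 : ℕ → AddSubgroup A` with `[GradedRing 𝒜]`), let
`σ : A → A` be a Frobenius splitting of `A` that is graded (`σ (𝒜 (p*n)) ⊆ 𝒜 n` and
`σ` vanishes on `𝒜 n` when `p ∤ n`), and let `(I m)` be a decreasing multiplicative
filtration of `A` by homogeneous ideals with `σ (I (p*m+1)) ⊆ I (m+1)`.

The associated graded ring `gr A = ⊕_{m≥0} I m / I (m+1)` is presented abstractly as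
in Statement 3: a commutative ring `B` with additive maps `g m : I m →+ B` whose
kernels are `I (m+1)`, compatible with multiplication and unit, exhibiting `B` as the
internal direct sum of the graded pieces.  `gr A` inherits a second grading from `𝒜`,
its `(m, n)` bigraded piece `(I m ∩ 𝒜 n + I (m+1)) / I (m+1)` being the image under
`g m` of `{x ∈ I m | x ∈ 𝒜 n}`.

Conclusion: `gr A` admits a Frobenius splitting `τ` (additive, `τ (ξ^p * η) = ξ * τ η`,
`τ 1 = 1`) that is bigraded: `τ` maps the bidegree `(p*m, p*n)` piece into the bidegree
`(m, n)` piece, and `τ` vanishes on every bidegree `(m', n')` piece with `p ∤ m'` or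
`p ∤ n'`. -/
theorem stmt_4 (p : ℕ) (hp : p.Prime)
    (A : Type*) [CommRing A] (hchar : (p : A) = 0)
    (𝒜 : ℕ → AddSubgroup A) [GradedRing 𝒜]
    (σ : A → A)
    (hσadd : ∀ f g : A, σ (f + g) = σ f + σ g)
    (hσfrob : ∀ f g : A, σ (f ^ p * g) = f * σ g)
    (hσone : σ 1 = 1)
    -- `σ` is graded:
    (hσgr : ∀ n : ℕ, ∀ x ∈ 𝒜 (p * n), σ x ∈ 𝒜 n)
    (hσgr' : ∀ n : ℕ, ¬ p ∣ n → ∀ x ∈ 𝒜 n, σ x = 0)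
    (I : ℕ → Ideal A)
    (hI0 : I 0 = ⊤)
    (hIdec : ∀ m : ℕ, I (m + 1) ≤ I m)
    (hImul : ∀ m n : ℕ, I m * I n ≤ I (m + n))
    -- each ideal `I m` is homogeneous with respect to the grading `𝒜`:
    (hIhom : ∀ m : ℕ, ∀ x ∈ I m, ∀ n : ℕ, ((DirectSum.decompose 𝒜 x n : 𝒜 n) : A) ∈ I m)
    (hσI : ∀ m : ℕ, ∀ x ∈ I (p * m + 1), σ x ∈ I (m + 1))
    -- `B`, together with the maps `g m`, is the associated graded ring `gr A`:
    (B : Type*) [CommRing B]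
    (g : ∀ m : ℕ, (I m) →+ B)
    (hg_ker : ∀ (m : ℕ) (x : I m), g m x = 0 ↔ (x : A) ∈ I (m + 1))
    (hg_mul : ∀ (a b : ℕ) (x : I a) (y : I b) (h : (x : A) * (y : A) ∈ I (a + b)),
      g a x * g b y = g (a + b) ⟨(x : A) * (y : A), h⟩)
    (hg_one : ∀ h : (1 : A) ∈ I 0, g 0 ⟨1, h⟩ = 1)
    (hg_internal : DirectSum.IsInternal (fun m : ℕ => (g m).range)) :
    -- conclusion: `B = gr A` admits a bigraded Frobenius splitting
    ∃ τ : B → B,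
      (∀ ξ η : B, τ (ξ + η) = τ ξ + τ η) ∧
      (∀ ξ η : B, τ (ξ ^ p * η) = ξ * τ η) ∧
      τ 1 = 1 ∧
      (∀ m n : ℕ, ∀ b ∈ ⇑(g (p * m)) '' {x : I (p * m) | (x : A) ∈ 𝒜 (p * n)},
        τ b ∈ ⇑(g m) '' {x : I m | (x : A) ∈ 𝒜 n}) ∧
      (∀ m' n' : ℕ, (¬ p ∣ m' ∨ ¬ p ∣ n') →
        ∀ b ∈ ⇑(g m') '' {x : I m' | (x : A) ∈ 𝒜 n'}, τ b = 0) := by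
  have hp0 : 0 < p := hp.pos
  let σ' : A →+ A := AddMonoidHom.mk' σ hσadd
  have hσ0 : σ 0 = 0 := σ'.map_zero
  have hanti : Antitone I := antitone_nat_of_succ_le hIdec
  have hσI' : ∀ m : ℕ, ∀ x ∈ I (p * m), σ x ∈ I m := by
    rintro (_ | m) x hx
    · simp [hI0]
    · exact hσI m x (hanti (by rw [Nat.mul_succ]; omega) hx)
  have hpB : (p : B) = 0 := by
    have h1 : (1 : A) ∈ I 0 := by simp [hI0]
    have h2 : p • (⟨1, h1⟩ : I 0) = 0 := Subtype.ext (by simp [hchar])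
    rw [← nsmul_one, ← hg_one h1, ← map_nsmul, h2, map_zero]
  -- The component of `τ` on the piece of filtration degree `m`.
  have hpiece : ∀ m : ℕ, ∃ t : (g m).range →+ B,
      (∀ c, m = p * c → ∀ (x : I m) (h : σ x ∈ I c), t ⟨g m x, x, rfl⟩ = g c ⟨σ x, h⟩) ∧
      (¬ p ∣ m → t = 0) := by
    intro m
    by_cases hm : p ∣ m
    · obtain ⟨c, rfl⟩ := hm
      let s : I (p * c) →+ B := (g c).comp <| AddMonoidHom.mk'
        (fun x => (⟨σ x, hσI' c x x.2⟩ : I c)) (fun x y => Subtype.ext (hσadd x y))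
      have hs : (g (p * c)).rangeRestrict.ker ≤ s.ker := by
        intro x hx
        rw [AddMonoidHom.ker_rangeRestrict, AddMonoidHom.mem_ker, hg_ker] at hx
        exact (hg_ker c _).2 (hσI c x hx)
      refine ⟨AddMonoidHom.liftOfSurjective _ (g (p * c)).rangeRestrict_surjective ⟨s, hs⟩,
        fun c' hc x h => ?_, fun h => absurd (dvd_mul_right p c) h⟩
      obtain rfl : c = c' := Nat.eq_of_mul_eq_mul_left hp0 hc
      exact AddMonoidHom.liftOfRightInverse_comp_apply _ _
        (Function.rightInverse_surjInv (g (p * c)).rangeRestrict_surjective) ⟨s, hs⟩ x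
    · exact ⟨0, fun c hc => absurd ⟨c, hc⟩ hm, fun _ => rfl⟩
  choose t ht ht0 using hpiece
  obtain ⟨τ, hτ⟩ := exists_extend_of_isInternal hg_internal t
  have hτp : ∀ (m c : ℕ), m = p * c → ∀ (x : I m) (h : σ x ∈ I c),
      τ (g m x) = g c ⟨σ x, h⟩ := fun m c hm x h =>
    (hτ m ⟨g m x, x, rfl⟩).trans (ht m c hm x h)
  have hτ0 : ∀ m, ¬ p ∣ m → ∀ x : I m, τ (g m x) = 0 := fun m hm x =>
    (hτ m ⟨g m x, x, rfl⟩).trans (by rw [ht0 m hm]; rfl)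
  have hind : ∀ P : B → Prop, P 0 → (∀ m (x : I m), P (g m x)) →
      (∀ ξ η, P ξ → P η → P (ξ + η)) → ∀ ξ, P ξ := by
    intro P h0 hg hadd ξ
    obtain ⟨d, rfl⟩ := hg_internal.2 ξ
    induction d using DirectSum.induction_on with
    | zero => simpa using h0
    | of m b =>
      obtain ⟨_, x, rfl⟩ := b
      simpa using hg m x
    | add d e hd he => simpa using hadd _ _ hd he
  have hhom : ∀ (a : ℕ) (x : I a) (b : ℕ) (y : I b),
      τ (g a x ^ p * g b y) = g a x * τ (g b y) := by
    intro a x b y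
    have hx := pow_mem_filtration hI0 hImul x.2 p
    rw [symbol_pow hI0 hImul g hg_mul hg_one x p hx,
      hg_mul _ _ _ _ (hImul _ _ (Ideal.mul_mem_mul hx y.2))]
    by_cases hb : p ∣ b
    · obtain ⟨c, rfl⟩ := hb
      have hy := hσI' c y y.2
      have hxy : (x : A) * σ y ∈ I (a + c) := hImul _ _ (Ideal.mul_mem_mul x.2 hy)
      rw [hτp _ c rfl y hy, hg_mul a c x ⟨σ y, hy⟩ hxy,
        hτp _ (a + c) (by ring) _ (by simpa only [hσfrob] using hxy)]
      exact symbol_congr g rfl (hσfrob _ _) _ _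
    · rw [hτ0 b hb, mul_zero, hτ0]
      rwa [Nat.dvd_add_right (dvd_mul_right p a)]
  refine ⟨τ, map_add τ, fun ξ η => ?_, ?_, ?_, ?_⟩
  · refine hind (fun ξ => τ (ξ ^ p * η) = ξ * τ η) (by simp [hp.ne_zero]) (fun a x => ?_)
      (fun ξ ξ' h h' => ?_) ξ
    · exact hind (fun η => τ (g a x ^ p * η) = g a x * τ η) (by simp) (fun b y => hhom a x b y)
        (fun η η' h h' => by rw [mul_add, map_add, h, h', map_add, mul_add]) η
    · rw [add_pow_of_prime_eq_zero hp hpB, add_mul, map_add, h, h', add_mul]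
  · have h1 : (1 : A) ∈ I 0 := by simp [hI0]
    rw [← hg_one h1, hτp 0 0 (by simp) _ (by simp [hI0])]
    exact symbol_congr g rfl hσone _ _
  · rintro m n _ ⟨x, hx, rfl⟩
    exact ⟨⟨σ x, hσI' m x x.2⟩, hσgr n x hx, (hτp _ m rfl x _).symm⟩
  · rintro m' n' hmn _ ⟨x, hx, rfl⟩
    by_cases hm : p ∣ m'
    · obtain ⟨m, rfl⟩ := hm
      have hn : ¬ p ∣ n' := hmn.resolve_left (fun h => h (dvd_mul_right p m))
      have hσx : σ x = 0 := hσgr' n' hn x hx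
      rw [hτp _ m rfl x (hσI' m x x.2), hg_ker]
      simp [hσx]
    · exact hτ0 m' hm x
end
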